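/- Let k be a positive integer, let G be a finite simple graph, let I ⊆ V(G), and let P be an I-connected path decomposition of G of width at most k−1 that is S-structured for every bottleneck S of G. Then the family of intervals {I(S,P) : S a bottleneck of G} is laminar: for any two bottlenecks S and S', either I(S,P) ⊆ I(S',P), or I(S',P) ⊆ I(S,P), or I(S,P) ∩ I(S',P) = ∅. -/

import Mathlib

/-!
Laminarity follows from two observations about a bottleneck `S`.

* `exists_inBranch`: `S` has an in-branch. With `p` the largest first index and `q` the smallest
  last index of a vertex of `S`, every `S`-branch that is not an in-branch meets `X p` or `X q`.
  Branches are pairwise disjoint, so there are at most `2k` of these. Hence `α(S)` and `β(S)` are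
  attained, and `S` is contained in every bag of `I(S,P)`.
* `subset_of_branch`: let `K` be an `S'`-branch that meets one bag of `I(S,P)` and misses
  another. Since `S` lies in the missed bag, `K` avoids `S`, so `K` and `S' \ S` lie in a
  common component `C` of `G - S`. This `C` does not wait in `I(S,P)`, so it is an in-branch of `S` and occurs only in
  bags of `I(S,P)`. If `S'` is contained in some bag outside `I(S,P)`, then `S' ⊆ S`.

If `α(S) < α(S') ≤ β(S) < β(S')`, the second observation applies to an in-branch of `S'` starting
at `α(S')`, and, with the roles exchanged, to an in-branch of `S` ending at `β(S)`. So `S = S'`,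
which is absurd.
-/

open SimpleGraph

variable {V : Type*}

/-- `N_G(Y)`: the set of vertices outside `Y` having a neighbor in `Y`. -/
def nbhdSet (G : SimpleGraph V) (Y : Set V) : Set V :=
  {v | v ∉ Y ∧ ∃ u ∈ Y, G.Adj u v}

/-- `C` is a connected component of the subgraph of `G` induced by `U`. -/
def IsCompIn (G : SimpleGraph V) (U C : Set V) : Prop :=
  C.Nonempty ∧ C ⊆ U ∧ (G.induce C).Connected ∧
    ∀ u ∈ C, ∀ v ∈ U, G.Adj u v → v ∈ C

/-- `C` is a connected component of `G - S`. -/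
def IsCompOf (G : SimpleGraph V) (S C : Set V) : Prop :=
  IsCompIn G Sᶜ C

/-- `C` is an `S`-branch: a connected component of `G - S` with `N_G(C) = S`. -/
def IsBranch (G : SimpleGraph V) (S C : Set V) : Prop :=
  IsCompOf G S C ∧ nbhdSet G C = S

/-- `S` is a bottleneck (for the width parameter `k`): a nonempty set with
at least `2k+1` `S`-branches. -/
def IsBottleneck (G : SimpleGraph V) (k : ℕ) (S : Set V) : Prop :=
  S.Nonempty ∧ 2 * k + 1 ≤ {C : Set V | IsBranch G S C}.ncard

/-- `(X 0, …, X (l-1))` is a path decomposition of `G`. -/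
def IsPathDecomp (G : SimpleGraph V) (l : ℕ) (X : ℕ → Set V) : Prop :=
  (∀ v, ∃ i < l, v ∈ X i) ∧
  (∀ u v, G.Adj u v → ∃ i < l, u ∈ X i ∧ v ∈ X i) ∧
  (∀ i j m, i ≤ j → j ≤ m → m < l → X i ∩ X m ⊆ X j)

/-- The width of a path decomposition: the maximum bag size minus one. -/
noncomputable def pdWidth (l : ℕ) (X : ℕ → Set V) : ℕ :=
  ((Finset.range l).sup fun i => (X i).ncard) - 1

/-- The set of indices of bags meeting the vertex set `C`. -/
def supp (l : ℕ) (X : ℕ → Set V) (C : Set V) : Set ℕ :=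
  {t | t < l ∧ (C ∩ X t).Nonempty}

/-- `a(C)`: the first index of a bag meeting `C`. -/
noncomputable def firstIdx (l : ℕ) (X : ℕ → Set V) (C : Set V) : ℕ :=
  sInf (supp l X C)

/-- `b(C)`: the last index of a bag meeting `C`. -/
noncomputable def lastIdx (l : ℕ) (X : ℕ → Set V) (C : Set V) : ℕ :=
  sSup (supp l X C)

/-- `C` is an in-branch of `S` with respect to the decomposition:
an `S`-branch with `S ⊆ X (a C)` and `S ⊆ X (b C)`. -/
def IsInBranch (G : SimpleGraph V) (l : ℕ) (X : ℕ → Set V) (S C : Set V) : Prop :=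
  IsBranch G S C ∧ S ⊆ X (firstIdx l X C) ∧ S ⊆ X (lastIdx l X C)

/-- `α(S)`: the minimum of `a(H)` over in-branches `H` of `S`. -/
noncomputable def botStart (G : SimpleGraph V) (l : ℕ) (X : ℕ → Set V) (S : Set V) : ℕ :=
  sInf {i | ∃ C, IsInBranch G l X S C ∧ i = firstIdx l X C}

/-- `β(S)`: the maximum of `b(H)` over in-branches `H` of `S`. -/
noncomputable def botEnd (G : SimpleGraph V) (l : ℕ) (X : ℕ → Set V) (S : Set V) : ℕ :=
  sSup {i | ∃ C, IsInBranch G l X S C ∧ i = lastIdx l X C}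

/-- The interval `I(S,P) = [α(S), β(S)]` of a bottleneck `S`. -/
noncomputable def botInterval (G : SimpleGraph V) (l : ℕ) (X : ℕ → Set V) (S : Set V) : Set ℕ :=
  Set.Icc (botStart G l X S) (botEnd G l X S)

/-- A pre-branch of `S`. -/
def IsPreBranch (G : SimpleGraph V) (l : ℕ) (X : ℕ → Set V) (S C : Set V) : Prop :=
  IsBranch G S C ∧ ¬ IsInBranch G l X S C ∧ firstIdx l X C < botStart G l X S

/-- A post-branch of `S`. -/
def IsPostBranch (G : SimpleGraph V) (l : ℕ) (X : ℕ → Set V) (S C : Set V) : Prop :=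
  IsBranch G S C ∧ ¬ IsInBranch G l X S C ∧
    botStart G l X S ≤ firstIdx l X C ∧ botEnd G l X S < lastIdx l X C

/-- `C` waits in the interval `[i, j]` of the decomposition. -/
def WaitsIn (X : ℕ → Set V) (C : Set V) (i j : ℕ) : Prop :=
  ∀ t, i ≤ t → t ≤ j → C ∩ X t = C ∩ X i

/-- The decomposition is `S`-structured: every component of `G - S` that is not an
`S`-branch, and every pre- or post-branch of `S`, waits in `I(S,P)`. -/
def IsStructured (G : SimpleGraph V) (l : ℕ) (X : ℕ → Set V) (S : Set V) : Prop :=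
  ∀ C : Set V,
    ((IsCompOf G S C ∧ ¬ IsBranch G S C) ∨ IsPreBranch G l X S C ∨ IsPostBranch G l X S C) →
    WaitsIn X C (botStart G l X S) (botEnd G l X S)

/-- The decomposition is `I`-connected: every connected component of the subgraph
induced by any prefix of bags contains a vertex of `I`. -/
def IsIConn (G : SimpleGraph V) (l : ℕ) (X : ℕ → Set V) (I : Set V) : Prop :=
  ∀ i < l, ∀ C : Set V, IsCompIn G {v | ∃ j ≤ i, v ∈ X j} C → (C ∩ I).Nonempty

/-! ### Connected sets and components -/

/-- A subset of a connected set which is nonempty and closed under adjacency is everything. -/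
lemma subset_of_closed {G : SimpleGraph V} {C L : Set V} (hC : (G.induce C).Connected)
    {v : V} (hvC : v ∈ C) (hvL : v ∈ L)
    (hcl : ∀ u ∈ C, u ∈ L → ∀ w ∈ C, G.Adj u w → w ∈ L) : C ⊆ L := by
  intro w hw
  obtain ⟨p⟩ := hC.preconnected ⟨v, hvC⟩ ⟨w, hw⟩
  have key : ∀ (x y : C), (G.induce C).Walk x y → (x : V) ∈ L → (y : V) ∈ L := by
    intro x y p
    induction p with
    | nil => exact id
    | cons h _ ih => exact fun hx => ih (hcl _ (Subtype.coe_prop _) hx _ (Subtype.coe_prop _) h)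
  exact key _ _ p hvL

lemma subset_of_comp {G : SimpleGraph V} {U C K : Set V} (hC : IsCompIn G U C)
    (hK : (G.induce K).Connected) (hKU : K ⊆ U) {v : V} (hvK : v ∈ K) (hvC : v ∈ C) : K ⊆ C :=
  subset_of_closed hK hvK hvC fun u _ huC w hw h => hC.2.2.2 u huC w (hKU hw) h

lemma comp_eq {G : SimpleGraph V} {U C D : Set V} (hC : IsCompIn G U C) (hD : IsCompIn G U D)
    {v : V} (hvC : v ∈ C) (hvD : v ∈ D) : C = D :=
  (subset_of_comp hD hC.2.2.1 hC.2.1 hvC hvD).antisymm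
    (subset_of_comp hC hD.2.2.1 hD.2.1 hvD hvC)

/-- The component of a vertex is obtained as a maximal connected set containing it. -/
lemma exists_comp [Finite V] (G : SimpleGraph V) {U : Set V} {v : V} (hv : v ∈ U) :
    ∃ C, IsCompIn G U C ∧ v ∈ C := by
  have hfin : {C : Set V | v ∈ C ∧ C ⊆ U ∧ (G.induce C).Connected}.Finite := Set.toFinite _
  have hsing : ∀ w, (G.induce {w}).Connected := fun w =>
    (connected_iff _).2 ⟨Preconnected.of_subsingleton, ⟨⟨w, rfl⟩⟩⟩
  obtain ⟨C, hmax⟩ := hfin.exists_maximal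
    ⟨{v}, rfl, Set.singleton_subset_iff.2 hv, hsing v⟩
  obtain ⟨hvC, hCU, hcon⟩ := hmax.prop
  refine ⟨C, ⟨⟨v, hvC⟩, hCU, hcon, fun u hu w hw h => ?_⟩, hvC⟩
  have hcon' : (G.induce (C ∪ {w})).Connected :=
    connected_induce_union hcon.preconnected (hsing w).preconnected hu rfl h
  exact hmax.le_of_ge ⟨Or.inl hvC, Set.union_subset hCU (Set.singleton_subset_iff.2 hw), hcon'⟩
    Set.subset_union_left (Or.inr rfl)

/-! ### Bags meeting a vertex set -/

section Support

variable {G : SimpleGraph V} {l : ℕ} {X : ℕ → Set V} {C : Set V}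

lemma bddAbove_supp : BddAbove (supp l X C) := ⟨l, fun _ h => h.1.le⟩

lemma supp_nonempty (hP : IsPathDecomp G l X) (hC : C.Nonempty) : (supp l X C).Nonempty := by
  obtain ⟨v, hv⟩ := hC
  obtain ⟨i, hi, hvi⟩ := hP.1 v
  exact ⟨i, hi, v, hv, hvi⟩

lemma firstIdx_mem (hP : IsPathDecomp G l X) (hC : C.Nonempty) : firstIdx l X C ∈ supp l X C :=
  Nat.sInf_mem (supp_nonempty hP hC)

lemma lastIdx_mem (hP : IsPathDecomp G l X) (hC : C.Nonempty) : lastIdx l X C ∈ supp l X C :=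
  Nat.sSup_mem (supp_nonempty hP hC) bddAbove_supp

lemma firstIdx_le {t : ℕ} (h : t ∈ supp l X C) : firstIdx l X C ≤ t := Nat.sInf_le h

lemma le_lastIdx {t : ℕ} (h : t ∈ supp l X C) : t ≤ lastIdx l X C := le_csSup bddAbove_supp h

lemma mem_supp_singleton {v : V} {t : ℕ} : t ∈ supp l X {v} ↔ t < l ∧ v ∈ X t := by
  simp [supp]

/-- The bags meeting a connected set form an interval. -/
lemma supp_convex (hP : IsPathDecomp G l X) (hC : (G.induce C).Connected) {i j m : ℕ}
    (hi : i ∈ supp l X C) (hm : m ∈ supp l X C) (hij : i ≤ j) (hjm : j ≤ m) :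
    j ∈ supp l X C := by
  have hjl : j < l := hjm.trans_lt hm.1
  by_contra hj
  have hno : ∀ v ∈ C, v ∉ X j := fun v hv hvj => hj ⟨hjl, v, hv, hvj⟩
  obtain ⟨-, u, huC, hui⟩ := hi
  obtain ⟨hml, w, hwC, hwm⟩ := hm
  -- By connectedness, all vertices of `C` occur before `j`, which fails for `w`.
  have hsub : C ⊆ {v | ∃ t ≤ j, v ∈ X t} := by
    refine subset_of_closed hC huC ⟨i, hij, hui⟩ ?_
    rintro x hxC ⟨t, htj, hxt⟩ y _ hxy
    obtain ⟨r, hr, hxr, hyr⟩ := hP.2.1 x y hxy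
    refine ⟨r, ?_, hyr⟩
    by_contra hrj
    exact hno x hxC (hP.2.2 t j r htj (by omega) hr ⟨hxt, hxr⟩)
  obtain ⟨t, htj, hwt⟩ := hsub hwC
  exact hno w hwC (hP.2.2 t j m htj hjm hml ⟨hwt, hwm⟩)

end Support

/-! ### In-branches and bottleneck intervals -/

section InBranches

variable {G : SimpleGraph V} {l : ℕ} {X : ℕ → Set V} {S : Set V}

/-- A branch of `S` shares a bag with each vertex of `S`. -/
lemma branch_share (hP : IsPathDecomp G l X) {C : Set V} (hC : IsBranch G S C) {s : V}
    (hs : s ∈ S) : ∃ t, t ∈ supp l X C ∧ t ∈ supp l X {s} := by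
  obtain ⟨-, u, hu, hus⟩ : s ∈ nbhdSet G C := hC.2 ▸ hs
  obtain ⟨t, ht, hut, hst⟩ := hP.2.1 u s hus
  exact ⟨t, ⟨ht, u, hu, hut⟩, mem_supp_singleton.2 ⟨ht, hst⟩⟩

lemma ncard_le_of_pdWidth {k : ℕ} (hk : 1 ≤ k) (hw : pdWidth l X ≤ k - 1) {i : ℕ} (hi : i < l) :
    (X i).ncard ≤ k := by
  have h := Finset.le_sup (f := fun i => (X i).ncard) (Finset.mem_range.2 hi)
  simp only [pdWidth] at hw h
  omega

lemma exists_inBranch [Finite V] {k : ℕ} (hk : 1 ≤ k) (hP : IsPathDecomp G l X)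
    (hw : pdWidth l X ≤ k - 1) (hS : IsBottleneck G k S) : ∃ C, IsInBranch G l X S C := by
  by_contra hnone
  push Not at hnone
  obtain ⟨s₀, hs₀, hp⟩ := Set.exists_max_image S (fun s => firstIdx l X {s}) S.toFinite hS.1
  obtain ⟨s₁, hs₁, hq⟩ := Set.exists_min_image S (fun s => lastIdx l X {s}) S.toFinite hS.1
  set p := firstIdx l X {s₀}
  set q := lastIdx l X {s₁}
  have hpl : p < l := (firstIdx_mem hP (Set.singleton_nonempty s₀)).1
  have hql : q < l := (lastIdx_mem hP (Set.singleton_nonempty s₁)).1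
  have hmeet : ∀ C, IsBranch G S C → ∃ v, v ∈ C ∧ v ∈ X p ∪ X q := by
    intro C hC
    have hcon := hC.1.2.2.1
    have hfirst := firstIdx_mem hP hC.1.1
    have hlast := lastIdx_mem hP hC.1.1
    by_cases h1 : S ⊆ X (firstIdx l X C)
    · have h2 : ¬ S ⊆ X (lastIdx l X C) := fun h2 => hnone C ⟨hC, h1, h2⟩
      obtain ⟨s, hs, hsX⟩ := Set.not_subset.1 h2
      obtain ⟨t, htC, hts⟩ := branch_share hP hC hs
      obtain ⟨r, hrC, hrs⟩ := branch_share hP hC hs₁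
      have hle : q ≤ lastIdx l X C := by
        by_contra hlt
        have hsl := lastIdx_mem hP (Set.singleton_nonempty s)
        refine hsX (hP.2.2 t _ _ (le_lastIdx htC) ?_ hsl.1
          ⟨(mem_supp_singleton.1 hts).2, (mem_supp_singleton.1 hsl).2⟩)
        have := hq s hs
        omega
      obtain ⟨-, v, hvC, hv⟩ :=
        supp_convex hP hcon hfirst hlast ((firstIdx_le hrC).trans (le_lastIdx hrs)) hle
      exact ⟨v, hvC, Or.inr hv⟩
    · obtain ⟨s, hs, hsX⟩ := Set.not_subset.1 h1
      obtain ⟨t, htC, hts⟩ := branch_share hP hC hs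
      obtain ⟨r, hrC, hrs⟩ := branch_share hP hC hs₀
      have hle : firstIdx l X C ≤ p := by
        by_contra hlt
        have hsl := firstIdx_mem hP (Set.singleton_nonempty s)
        refine hsX (hP.2.2 _ _ t ?_ (firstIdx_le htC) hts.1
          ⟨(mem_supp_singleton.1 hsl).2, (mem_supp_singleton.1 hts).2⟩)
        have := hp s hs
        omega
      obtain ⟨-, v, hvC, hv⟩ :=
        supp_convex hP hcon hfirst hlast hle ((firstIdx_le hrs).trans (le_lastIdx hrC))
      exact ⟨v, hvC, Or.inl hv⟩
  have : Nonempty V := ⟨s₀⟩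
  -- Branches are pairwise disjoint, so picking such a vertex in each branch is injective.
  choose! f hfC hfX using hmeet
  have hcard : {C : Set V | IsBranch G S C}.ncard ≤ (X p ∪ X q).ncard := by
    refine Set.ncard_le_ncard_of_injOn f hfX ?_ (Set.toFinite _)
    intro C hC D hD hCD
    exact comp_eq hC.1 hD.1 (hfC C hC) (hCD ▸ hfC D hD)
  have h1 := Set.ncard_union_le (X p) (X q)
  have h2 := ncard_le_of_pdWidth hk hw hpl
  have h3 := ncard_le_of_pdWidth hk hw hql
  have h4 := hS.2
  omega

lemma exists_firstIdx_eq_botStart (h : ∃ C, IsInBranch G l X S C) :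
    ∃ C, IsInBranch G l X S C ∧ firstIdx l X C = botStart G l X S := by
  obtain ⟨C, hC⟩ := h
  obtain ⟨D, hD, hDe⟩ := Nat.sInf_mem (s := {i | ∃ C, IsInBranch G l X S C ∧ i = firstIdx l X C})
    ⟨_, C, hC, rfl⟩
  exact ⟨D, hD, hDe.symm⟩

lemma bddAbove_lastIdx (hP : IsPathDecomp G l X) :
    BddAbove {i | ∃ C, IsInBranch G l X S C ∧ i = lastIdx l X C} := by
  refine ⟨l, ?_⟩
  rintro _ ⟨C, hC, rfl⟩
  exact (lastIdx_mem hP hC.1.1.1).1.le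

lemma exists_lastIdx_eq_botEnd (hP : IsPathDecomp G l X) (h : ∃ C, IsInBranch G l X S C) :
    ∃ C, IsInBranch G l X S C ∧ lastIdx l X C = botEnd G l X S := by
  obtain ⟨C, hC⟩ := h
  obtain ⟨D, hD, hDe⟩ := Nat.sSup_mem (s := {i | ∃ C, IsInBranch G l X S C ∧ i = lastIdx l X C})
    ⟨_, C, hC, rfl⟩ (bddAbove_lastIdx hP)
  exact ⟨D, hD, hDe.symm⟩

lemma botStart_le {C : Set V} (hC : IsInBranch G l X S C) :
    botStart G l X S ≤ firstIdx l X C := Nat.sInf_le ⟨C, hC, rfl⟩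

lemma le_botEnd (hP : IsPathDecomp G l X) {C : Set V} (hC : IsInBranch G l X S C) :
    lastIdx l X C ≤ botEnd G l X S := le_csSup (bddAbove_lastIdx hP) ⟨C, hC, rfl⟩

lemma botEnd_lt (hP : IsPathDecomp G l X) (h : ∃ C, IsInBranch G l X S C) :
    botEnd G l X S < l := by
  obtain ⟨C, hC, hCe⟩ := exists_lastIdx_eq_botEnd hP h
  exact hCe ▸ (lastIdx_mem hP hC.1.1.1).1

lemma subset_bag (hP : IsPathDecomp G l X) (h : ∃ C, IsInBranch G l X S C) {t : ℕ}
    (h1 : botStart G l X S ≤ t) (h2 : t ≤ botEnd G l X S) : S ⊆ X t := by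
  obtain ⟨C, hC, hCe⟩ := exists_firstIdx_eq_botStart h
  obtain ⟨D, hD, hDe⟩ := exists_lastIdx_eq_botEnd hP h
  exact fun s hs => hP.2.2 _ t _ h1 h2 (botEnd_lt hP h) ⟨hCe ▸ hC.2.1 hs, hDe ▸ hD.2.2 hs⟩

/-- A component of `G - S` that does not wait in `I(S,P)` is an in-branch: a branch supported
within `I(S,P)` is one because `S` lies in all bags of `I(S,P)`. -/
lemma inBranch_of_not_waits (hP : IsPathDecomp G l X) (h : ∃ C, IsInBranch G l X S C)
    (hstr : IsStructured G l X S) {C : Set V} (hC : IsCompOf G S C)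
    (hwait : ¬ WaitsIn X C (botStart G l X S) (botEnd G l X S)) : IsInBranch G l X S C := by
  by_contra hin
  have hbr : IsBranch G S C := by
    by_contra hbr
    exact hwait (hstr C (Or.inl ⟨hC, hbr⟩))
  have h1 : botStart G l X S ≤ firstIdx l X C := by
    by_contra h1
    exact hwait (hstr C (Or.inr (Or.inl ⟨hbr, hin, not_le.1 h1⟩)))
  have h2 : lastIdx l X C ≤ botEnd G l X S := by
    by_contra h2
    exact hwait (hstr C (Or.inr (Or.inr ⟨hbr, hin, h1, not_le.1 h2⟩)))
  have h3 : firstIdx l X C ≤ lastIdx l X C := le_lastIdx (firstIdx_mem hP hC.1)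
  exact hin ⟨hbr, subset_bag hP h h1 (h3.trans h2), subset_bag hP h (h1.trans h3) h2⟩

/-- If an `S'`-branch `K` meets the bag `r` and misses the bag `r'` of `I(S,P)`, and `S'` is
contained in a bag `t` outside `I(S,P)`, then `S' ⊆ S`. -/
lemma subset_of_branch [Finite V] (hP : IsPathDecomp G l X) (h : ∃ C, IsInBranch G l X S C)
    (hstr : IsStructured G l X S) {S' K : Set V} (hK : IsBranch G S' K) {r r' t : ℕ}
    (hr : r ∈ botInterval G l X S) (hr' : r' ∈ botInterval G l X S)
    (hKr : (K ∩ X r).Nonempty) (hKr' : ¬ (K ∩ X r').Nonempty)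
    (htl : t < l) (ht : t ∉ botInterval G l X S) (hS't : S' ⊆ X t) : S' ⊆ S := by
  have hKS : K ⊆ Sᶜ := fun v hv hvS => hKr' ⟨v, hv, subset_bag hP h hr'.1 hr'.2 hvS⟩
  obtain ⟨v, hvK, hvr⟩ := hKr
  obtain ⟨C, hC, hvC⟩ := exists_comp G (hKS hvK)
  have hKC : K ⊆ C := subset_of_comp hC hK.1.2.2.1 hKS hvK hvC
  have hin : IsInBranch G l X S C := by
    refine inBranch_of_not_waits hP h hstr hC fun hwait => hKr' ⟨v, hvK, ?_⟩
    have hmem : v ∈ C ∩ X r := ⟨hvC, hvr⟩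
    rw [hwait r hr.1 hr.2, ← hwait r' hr'.1 hr'.2] at hmem
    exact hmem.2
  intro s hs
  by_contra hsS
  obtain ⟨-, u, hu, hus⟩ : s ∈ nbhdSet G K := hK.2 ▸ hs
  have hsC : s ∈ C := hC.2.2.2 u (hKC hu) s hsS hus
  have hsupp : t ∈ supp l X C := ⟨htl, s, hsC, hS't hs⟩
  exact ht ⟨(botStart_le hin).trans (firstIdx_le hsupp),
    (le_lastIdx hsupp).trans (le_botEnd hP hin)⟩

/-- Two bottleneck intervals cannot cross. -/
lemma not_crossing [Finite V] (hP : IsPathDecomp G l X) {S' : Set V}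
    (h : ∃ C, IsInBranch G l X S C) (h' : ∃ C, IsInBranch G l X S' C)
    (hstr : IsStructured G l X S) (hstr' : IsStructured G l X S')
    (h1 : botStart G l X S < botStart G l X S') (h2 : botStart G l X S' ≤ botEnd G l X S)
    (h3 : botEnd G l X S < botEnd G l X S') : False := by
  have hl := botEnd_lt hP h
  have hl' := botEnd_lt hP h'
  obtain ⟨K', hK', hKe'⟩ := exists_firstIdx_eq_botStart h'
  obtain ⟨K, hK, hKe⟩ := exists_lastIdx_eq_botEnd hP h
  have hsub' : S' ⊆ S := by
    refine subset_of_branch hP h hstr hK'.1 (r := botStart G l X S') (r' := botStart G l X S)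
      (t := botEnd G l X S') ⟨h1.le, h2⟩ ⟨le_rfl, by omega⟩ ?_ ?_ hl'
      (fun hmem => absurd hmem.2 (by omega)) (subset_bag hP h' (by omega) le_rfl)
    · exact hKe' ▸ (firstIdx_mem hP hK'.1.1.1).2
    · intro hne
      have := firstIdx_le (l := l) (X := X) (C := K') ⟨by omega, hne⟩
      omega
  have hsub : S ⊆ S' := by
    refine subset_of_branch hP h' hstr' hK.1 (r := botEnd G l X S) (r' := botEnd G l X S')
      (t := botStart G l X S) ⟨h2, h3.le⟩ ⟨by omega, le_rfl⟩ ?_ ?_ (by omega)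
      (fun hmem => absurd hmem.1 (by omega)) (subset_bag hP h le_rfl (by omega))
    · exact hKe ▸ (lastIdx_mem hP hK.1.1.1).2
    · intro hne
      have := le_lastIdx (l := l) (X := X) (C := K) ⟨hl', hne⟩
      omega
  rw [hsub.antisymm hsub'] at h1
  exact lt_irrefl _ h1

end InBranches

/-- if an `I`-connected path decomposition of width at most `k-1`
is `S`-structured for every bottleneck `S`, then the family of bottleneck
intervals is laminar. -/
theorem stmt16 [Fintype V] (k : ℕ) (hk : 1 ≤ k) (G : SimpleGraph V) (I : Set V)
    (l : ℕ) (X : ℕ → Set V) (hP : IsPathDecomp G l X) (hIc : IsIConn G l X I)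
    (hw : pdWidth l X ≤ k - 1)
    (hstr : ∀ S : Set V, IsBottleneck G k S → IsStructured G l X S) :
    ∀ S S' : Set V, IsBottleneck G k S → IsBottleneck G k S' →
      botInterval G l X S ⊆ botInterval G l X S' ∨
      botInterval G l X S' ⊆ botInterval G l X S ∨
      botInterval G l X S ∩ botInterval G l X S' = ∅ := by
  intro S S' hS hS'
  have h := exists_inBranch hk hP hw hS
  have h' := exists_inBranch hk hP hw hS'
  have hc := not_crossing hP h h' (hstr S hS) (hstr S' hS')
  have hc' := not_crossing hP h' h (hstr S' hS') (hstr S hS)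
  by_contra! hcon
  obtain ⟨n1, n2, t, ht, ht'⟩ := hcon
  have m1 : ¬ (botStart G l X S' ≤ botStart G l X S ∧ botEnd G l X S ≤ botEnd G l X S') :=
    fun hh => n1 (Set.Icc_subset_Icc hh.1 hh.2)
  have m2 : ¬ (botStart G l X S ≤ botStart G l X S' ∧ botEnd G l X S' ≤ botEnd G l X S) :=
    fun hh => n2 (Set.Icc_subset_Icc hh.1 hh.2)
  simp only [botInterval, Set.mem_Icc] at ht ht'
  by_cases hlt : botStart G l X S < botStart G l X S'
  · exact hc hlt (by omega) (by omega)
  · exact hc' (by omega) (by omega) (by omega)
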